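/- arXiv:1203.4032 — 2 statements merged into one kernel-verified Lean document; each statement's English description precedes it below -/
import Mathlib

section
/- Suppose the perturbed weights satisfy β̃_nn = β_nn and |β̃_nj − β_nj| ≤ 2^{2−ν} (r+1) (η/2)^r β_nj for all 1 ≤ j < n ≤ N (as furnished by the Taylor approximation). Then Σ_{j=1}^{n-1} |β̃_nj − β_nj| ≤ 2^{2−ν} (r+1) (η/2)^r k_n^ν / Γ(ν+1) for every n, and Σ_{n=j+1}^N |β̃_nj − β_nj| ≤ 2^{2−ν} (r+1) (η/2)^r k_j^ν / Γ(ν+1) for every j. Moreover, if (r+1)(η/2)^r ≤ 2^{ν−2} Γ(ν+1) ρ_ν (k_min/T)^{1−ν} where k_min = min_{1≤n≤N} k_n, then Σ_{j=1}^{n-1} |β̃_nj − β_nj| ≤ ρ_ν T^{ν−1} k_n for all n and Σ_{n=j+1}^N |β̃_nj − β_nj| ≤ ρ_ν T^{ν−1} k_j for all j. -/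
/-!
With `G x = x ^ ν / Γ(ν + 1)`, whose derivative is the fractional kernel `x ^ (ν - 1) / Γ(ν)`, each
off-diagonal weight is a second difference of `G`:
`β n j = (G (t (n-1) - t (j-1)) - G (t (n-1) - t j)) - (G (t n - t (j-1)) - G (t n - t j))`.
Summing over `j < n` telescopes to `G (t (n-1)) - G (t n) + G (k n)`, and summing over `n > j`
telescopes to `G (k j) - (G (T - t (j-1)) - G (T - t j))`. Since `G` is monotone, these sums are at
most `G (k n)` and `G (k j)`; multiplying by the relative error gives the first two bounds. For the
last two, the smallness assumption turns the factor into `ρ (kmin / T) ^ (1 - ν)`, and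
`kmin ^ (1 - ν) * k ^ ν ≤ k`.
-/

open Real

/-- The primitive of the kernel `x ^ (ν - 1) / Γ(ν)` vanishing at `0`, i.e. `x ^ ν / Γ(ν + 1)`. -/
noncomputable def kernelPrimitive (ν x : ℝ) : ℝ := x ^ ν / Real.Gamma (ν + 1)

lemma kernelPrimitive_zero {ν : ℝ} (hν : 0 < ν) : kernelPrimitive ν 0 = 0 := by
  simp [kernelPrimitive, Real.zero_rpow hν.ne']

lemma kernelPrimitive_mono {ν x y : ℝ} (hν : 0 < ν) (hx : 0 ≤ x) (hxy : x ≤ y) :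
    kernelPrimitive ν x ≤ kernelPrimitive ν y := by
  have := (Real.Gamma_pos_of_pos (show 0 < ν + 1 by linarith)).le
  unfold kernelPrimitive
  gcongr

lemma intervalIntegrable_kernel {ν : ℝ} (hν : 0 < ν) (a c d : ℝ) :
    IntervalIntegrable (fun s => (a - s) ^ (ν - 1)) MeasureTheory.volume c d := by
  have h := (intervalIntegral.intervalIntegrable_rpow' (a := a - c) (b := a - d)
    (show -1 < ν - 1 by linarith)).comp_sub_left a
  simpa using h

lemma integral_kernel {ν : ℝ} (hν : 0 < ν) (a c d : ℝ) :
    (∫ s in c..d, (a - s) ^ (ν - 1)) = ((a - c) ^ ν - (a - d) ^ ν) / ν := by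
  rw [intervalIntegral.integral_comp_sub_left (fun x => x ^ (ν - 1)),
    integral_rpow (Or.inl (by linarith))]
  simp

/-- The weight integral is a second difference of the primitive. -/
lemma integral_kernel_sub {ν : ℝ} (hν : 0 < ν) (a b c d : ℝ) :
    (∫ s in c..d, ((a - s) ^ (ν - 1) - (b - s) ^ (ν - 1)) / Real.Gamma ν)
      = (kernelPrimitive ν (a - c) - kernelPrimitive ν (a - d))
        - (kernelPrimitive ν (b - c) - kernelPrimitive ν (b - d)) := by
  have hΓ := (Real.Gamma_pos_of_pos hν).ne'
  rw [intervalIntegral.integral_div, intervalIntegral.integral_sub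
    (intervalIntegrable_kernel hν a c d) (intervalIntegrable_kernel hν b c d),
    integral_kernel hν, integral_kernel hν]
  unfold kernelPrimitive
  rw [Real.Gamma_add_one hν.ne']
  field_simp

/-- The smallness assumption on the relative error `A` converts a bound by `k ^ ν / Γ(ν + 1)` into
one linear in the step size `k`. -/
lemma perturbation_le_linear {T ν ρ A κ k : ℝ} (hT : 0 < T) (hν0 : 0 < ν) (hν1 : ν < 1)
    (hρ : 0 ≤ ρ) (hκ : 0 < κ) (hκk : κ ≤ k)
    (hA : A ≤ (2 : ℝ) ^ (ν - 2) * Real.Gamma (ν + 1) * ρ * (κ / T) ^ (1 - ν)) :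
    (2 : ℝ) ^ (2 - ν) * A * (k ^ ν / Real.Gamma (ν + 1)) ≤ ρ * T ^ (ν - 1) * k := by
  have hΓ : 0 < Real.Gamma (ν + 1) := Real.Gamma_pos_of_pos (by linarith)
  have hk : 0 < k := hκ.trans_le hκk
  have h2 : (2 : ℝ) ^ (2 - ν) * (2 : ℝ) ^ (ν - 2) = 1 := by
    rw [← Real.rpow_add two_pos]; simp
  have hTν : T ^ (ν - 1) = (T ^ (1 - ν))⁻¹ := by
    rw [← Real.rpow_neg hT.le]; congr 1; ring
  have hkk : k ^ (1 - ν) * k ^ ν = k := by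
    rw [← Real.rpow_add hk]; simp
  calc (2 : ℝ) ^ (2 - ν) * A * (k ^ ν / Real.Gamma (ν + 1))
      ≤ (2 : ℝ) ^ (2 - ν) * ((2 : ℝ) ^ (ν - 2) * Real.Gamma (ν + 1) * ρ * (κ / T) ^ (1 - ν))
          * (k ^ ν / Real.Gamma (ν + 1)) := by gcongr
    _ = ((2 : ℝ) ^ (2 - ν) * (2 : ℝ) ^ (ν - 2)) * (ρ * T ^ (ν - 1)) * (κ ^ (1 - ν) * k ^ ν) := by
        rw [Real.div_rpow hκ.le hT.le, hTν]; field_simp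
    _ = ρ * T ^ (ν - 1) * (κ ^ (1 - ν) * k ^ ν) := by rw [h2, one_mul]
    _ ≤ ρ * T ^ (ν - 1) * (k ^ (1 - ν) * k ^ ν) := by
        have : 0 ≤ 1 - ν := by linarith
        gcongr
    _ = ρ * T ^ (ν - 1) * k := by rw [hkk]

/-- **Row and column sum bounds for the Taylor-perturbed weights (part of Theorem 5).**
If `|β̃_nj − β_nj| ≤ 2^{2−ν}(r+1)(η/2)^r β_nj` for all `j < n`, then the row and column
sums of `|β̃ − β|` are bounded by `2^{2−ν}(r+1)(η/2)^r k^ν/Γ(ν+1)`; moreover, if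
`(r+1)(η/2)^r ≤ 2^{ν−2} Γ(ν+1) ρ_ν (k_min/T)^{1−ν}`, they are bounded by
`ρ_ν T^{ν−1} k`. -/
theorem perturbed_weights_sum_bounds
    (T : ℝ) (hT : 0 < T) (N : ℕ) (hN : 1 ≤ N)
    (t : ℕ → ℝ) (ht0 : t 0 = 0) (htN : t N = T)
    (htmono : ∀ i, i < N → t i < t (i + 1))
    (ν : ℝ) (hν0 : 0 < ν) (hν1 : ν < 1)
    (k : ℕ → ℝ) (hk : ∀ n, k n = t n - t (n - 1))
    (β : ℕ → ℕ → ℝ)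
    (hβdiag : ∀ n, 1 ≤ n → n ≤ N → β n n = k n ^ ν / Real.Gamma (1 + ν))
    (hβ : ∀ j n, 1 ≤ j → j < n → n ≤ N →
      β n j = ∫ s in (t (j - 1))..(t j),
        ((t (n - 1) - s) ^ (ν - 1) - (t n - s) ^ (ν - 1)) / Real.Gamma ν)
    (hβpos : ∀ j n, 1 ≤ j → j < n → n ≤ N → 0 < β n j)
    (ρ : ℝ)
    (hρ : ρ = π ^ (1 - ν) * ((1 - ν) ^ (1 - ν) / (2 - ν) ^ (2 - ν)) * Real.sin (π * ν / 2))
    (r : ℕ) (hr : 1 ≤ r) (η : ℝ) (hη0 : 0 < η) (hη1 : η ≤ 1)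
    (βt : ℕ → ℕ → ℝ)
    (hβtdiag : ∀ n, 1 ≤ n → n ≤ N → βt n n = β n n)
    (hβt : ∀ j n, 1 ≤ j → j < n → n ≤ N →
      |βt n j - β n j| ≤ (2 : ℝ) ^ (2 - ν) * ((r : ℝ) + 1) * (η / 2) ^ r * β n j)
    (kmin : ℝ)
    (hkmin_le : ∀ n, 1 ≤ n → n ≤ N → kmin ≤ k n)
    (hkmin_mem : ∃ n, 1 ≤ n ∧ n ≤ N ∧ kmin = k n) :
    (∀ n, 1 ≤ n → n ≤ N →
        ∑ j ∈ Finset.Icc 1 (n - 1), |βt n j - β n j|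
          ≤ (2 : ℝ) ^ (2 - ν) * ((r : ℝ) + 1) * (η / 2) ^ r * (k n ^ ν / Real.Gamma (ν + 1)))
    ∧ (∀ j, 1 ≤ j → j ≤ N - 1 →
        ∑ n ∈ Finset.Icc (j + 1) N, |βt n j - β n j|
          ≤ (2 : ℝ) ^ (2 - ν) * ((r : ℝ) + 1) * (η / 2) ^ r * (k j ^ ν / Real.Gamma (ν + 1)))
    ∧ (((r : ℝ) + 1) * (η / 2) ^ r
          ≤ (2 : ℝ) ^ (ν - 2) * Real.Gamma (ν + 1) * ρ * (kmin / T) ^ (1 - ν) →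
        (∀ n, 1 ≤ n → n ≤ N →
            ∑ j ∈ Finset.Icc 1 (n - 1), |βt n j - β n j| ≤ ρ * T ^ (ν - 1) * k n)
        ∧ (∀ j, 1 ≤ j → j ≤ N - 1 →
            ∑ n ∈ Finset.Icc (j + 1) N, |βt n j - β n j| ≤ ρ * T ^ (ν - 1) * k j)) := by
  have hmono : ∀ m n, m ≤ n → n ≤ N → t m ≤ t n := by
    intro m n hmn
    induction n, hmn using Nat.le_induction with
    | base => exact fun _ => le_rfl
    | succ n _ ih => exact fun h => (ih (by omega)).trans (htmono n (by omega)).le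
  have hkpos : ∀ n, 1 ≤ n → n ≤ N → 0 < k n := by
    intro n h1 hn
    have := htmono (n - 1) (by omega)
    rw [Nat.sub_add_cancel h1] at this
    rw [hk]; linarith
  have hβ' : ∀ j n, 1 ≤ j → j < n → n ≤ N → β n j =
      (kernelPrimitive ν (t (n - 1) - t (j - 1)) - kernelPrimitive ν (t (n - 1) - t j))
        - (kernelPrimitive ν (t n - t (j - 1)) - kernelPrimitive ν (t n - t j)) := by
    intro j n h1 hj hn
    rw [hβ j n h1 hj hn, integral_kernel_sub hν0]
  have hrow : ∀ n, 1 ≤ n → n ≤ N →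
      ∑ j ∈ Finset.Icc 1 (n - 1), β n j ≤ kernelPrimitive ν (k n) := by
    intro n h1 hn
    have key : ∀ m, m ≤ n - 1 → ∑ j ∈ Finset.Icc 1 m, β n j =
        (kernelPrimitive ν (t (n - 1) - t 0) - kernelPrimitive ν (t (n - 1) - t m))
          - (kernelPrimitive ν (t n - t 0) - kernelPrimitive ν (t n - t m)) := by
      intro m
      induction m with
      | zero => intro _; simp
      | succ m ih =>
        intro hm
        rw [Finset.sum_Icc_succ_top (by omega), ih (by omega),
          hβ' (m + 1) n (by omega) (by omega) hn, Nat.add_sub_cancel]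
        ring
    rw [key _ le_rfl, sub_self, kernelPrimitive_zero hν0, ← hk]
    have := kernelPrimitive_mono hν0 (sub_nonneg.2 (hmono 0 (n - 1) (by omega) (by omega)))
      (sub_le_sub_right (hmono (n - 1) n (by omega) hn) (t 0))
    linarith
  have hcol : ∀ j, 1 ≤ j → j ≤ N →
      ∑ n ∈ Finset.Icc (j + 1) N, β n j ≤ kernelPrimitive ν (k j) := by
    intro j h1 hj
    have key : ∀ m, j ≤ m → m ≤ N → ∑ n ∈ Finset.Icc (j + 1) m, β n j =
        kernelPrimitive ν (k j)
          - (kernelPrimitive ν (t m - t (j - 1)) - kernelPrimitive ν (t m - t j)) := by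
      intro m hm
      induction m, hm using Nat.le_induction with
      | base => intro _; simp [hk, kernelPrimitive_zero hν0]
      | succ m hm ih =>
        intro hmN
        rw [Finset.sum_Icc_succ_top (by omega), ih (by omega),
          hβ' j (m + 1) h1 (by omega) hmN, Nat.add_sub_cancel]
        ring
    rw [key N hj le_rfl]
    have := kernelPrimitive_mono hν0 (sub_nonneg.2 (hmono j N hj le_rfl))
      (sub_le_sub_left (hmono (j - 1) j (by omega) hj) (t N))
    linarith
  have hC : 0 ≤ (2 : ℝ) ^ (2 - ν) * ((r : ℝ) + 1) * (η / 2) ^ r := by positivity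
  have hR : ∀ n, 1 ≤ n → n ≤ N → ∑ j ∈ Finset.Icc 1 (n - 1), |βt n j - β n j|
      ≤ (2 : ℝ) ^ (2 - ν) * ((r : ℝ) + 1) * (η / 2) ^ r * (k n ^ ν / Real.Gamma (ν + 1)) := by
    intro n h1 hn
    refine le_trans (Finset.sum_le_sum fun j hj => ?_)
      ((Finset.mul_sum _ _ _).symm.le.trans (mul_le_mul_of_nonneg_left (hrow n h1 hn) hC))
    rw [Finset.mem_Icc] at hj
    exact hβt j n hj.1 (by omega) hn
  have hS : ∀ j, 1 ≤ j → j ≤ N - 1 → ∑ n ∈ Finset.Icc (j + 1) N, |βt n j - β n j|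
      ≤ (2 : ℝ) ^ (2 - ν) * ((r : ℝ) + 1) * (η / 2) ^ r * (k j ^ ν / Real.Gamma (ν + 1)) := by
    intro j h1 hj
    refine le_trans (Finset.sum_le_sum fun n hn => ?_)
      ((Finset.mul_sum _ _ _).symm.le.trans
        (mul_le_mul_of_nonneg_left (hcol j h1 (by omega)) hC))
    rw [Finset.mem_Icc] at hn
    exact hβt j n h1 (by omega) hn.2
  refine ⟨hR, hS, fun hsmall => ?_⟩
  have hρ0 : 0 ≤ ρ := by
    have hsin : 0 ≤ Real.sin (π * ν / 2) :=
      Real.sin_nonneg_of_nonneg_of_le_pi (by positivity) (by nlinarith [Real.pi_pos])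
    have h1 : 0 ≤ 1 - ν := by linarith
    have h2 : 0 ≤ 2 - ν := by linarith
    rw [hρ]; positivity
  have hκ : 0 < kmin := by
    obtain ⟨n, h1, hn, rfl⟩ := hkmin_mem
    exact hkpos n h1 hn
  have hlin : ∀ n, 1 ≤ n → n ≤ N →
      (2 : ℝ) ^ (2 - ν) * ((r : ℝ) + 1) * (η / 2) ^ r * (k n ^ ν / Real.Gamma (ν + 1))
        ≤ ρ * T ^ (ν - 1) * k n := by
    intro n h1 hn
    have := perturbation_le_linear hT hν0 hν1 hρ0 hκ (hkmin_le n h1 hn) hsmall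
    rwa [← mul_assoc] at this
  exact ⟨fun n h1 hn => (hR n h1 hn).trans (hlin n h1 hn),
    fun j h1 hj => (hS j h1 hj).trans (hlin j h1 (by omega))⟩
end

section
/- Let 1 ≤ j ≤ n−1 ≤ N−1 and let r ≥ 1 be an integer. Write Δ_nj = t_{n−1/2} − t_{j−1/2}. Then there exists t* ∈ I_j = (t_{j-1}, t_j] such that β_nj = − Σ_{p=0}^{r−1} [ B_{ν−2p−1}(Δ_nj, k_n) / ((2p+1)! · 2^{2p}) ] k_j^{2p+1} − [ B_{ν−2r−1}(t_{n−1/2} − t*, k_n) / ((2r+1)! · 2^{2r}) ] k_j^{2r+1}. -/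
/-!
Let `m` be the midpoint of `I_n`, `c` the midpoint of `I_j`, `d = m - c` and `h = k_j / 2`.
Since `ω_{1+μ}' = ω_μ`, the integrand defining `β_nj` at `s` is `-B_{ν-1}(m - s, k_n)`, the
derivative of `B_ν(m - s, k_n)`, so `β_nj = g 0 h` where
`g 0 x = B_ν(d - x, k_n) - B_ν(d + x, k_n)`. The claim is the Taylor expansion of `g 0` at `0` with
Lagrange remainder: `g 0` is odd, so only odd powers of `h` occur, and its derivative of odd order
`2r + 1` is a sum of two values of `-B_{ν-2r-1}`, which equals twice an intermediate value.

When `j = n - 1` the derivatives of `g 0` blow up at `x = h`, so the usual Taylor theorem for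
functions that are smooth on the closed interval does not apply. `taylor_lagrange_of_continuousOn`
only asks for continuity at the right end point; it is proved by iterating Cauchy's mean value
theorem, and it yields an intermediate point strictly inside the interval, hence a `t*` away from
the singularity.
-/

open Real

/-- `ω_μ(t) = t^{μ-1}/Γ(μ)`. -/
noncomputable def omegaRL (μ x : ℝ) : ℝ := x ^ (μ - 1) / Real.Gamma μ

/-- `B_μ(t,k) = ω_{1+μ}(t + k/2) − ω_{1+μ}(t − k/2)`. -/
noncomputable def Bfun (μ x k : ℝ) : ℝ :=
  omegaRL (1 + μ) (x + k / 2) - omegaRL (1 + μ) (x - k / 2)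

/-- Iterated Cauchy mean value theorem: if `g i` is the `i`-th derivative of `g 0` and `g 0, …, g n`
vanish at `0`, then `g 0 h` is a Lagrange remainder of order `n + 1`. At the right end point `h`
only continuity of `g 0` is needed. -/
lemma exists_eq_of_vanishing (n : ℕ) : ∀ (g : ℕ → ℝ → ℝ) (h : ℝ), 0 < h →
    ContinuousOn (g 0) (Set.Icc 0 h) →
    (∀ i, ∀ x ∈ Set.Ico 0 h, HasDerivAt (g i) (g (i + 1) x) x) →
    (∀ i, i < n + 1 → g i 0 = 0) →
    ∃ η ∈ Set.Ioo 0 h, g 0 h = g (n + 1) η * h ^ (n + 1) / ((n + 1).factorial : ℝ) := by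
  induction n with
  | zero =>
    intro g h hh hc hd h0
    obtain ⟨η, hη, he⟩ := exists_hasDerivAt_eq_slope (g 0) (g 1) hh hc
      (fun x hx => hd 0 x ⟨hx.1.le, hx.2⟩)
    refine ⟨η, hη, ?_⟩
    have := h0 0 (by norm_num)
    rw [this] at he
    simp only [zero_add, he]
    simp [hh.ne']
  | succ n ih =>
    intro g h hh hc hd h0
    obtain ⟨η, hη, he⟩ := exists_ratio_hasDerivAt_eq_ratio_slope (g 0) (g 1) hh hc
      (fun x hx => hd 0 x ⟨hx.1.le, hx.2⟩) (fun x => x ^ (n + 2))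
      (fun x => ((n + 2 : ℕ) : ℝ) * x ^ (n + 1)) (by fun_prop)
      (fun x _ => hasDerivAt_pow (n + 2) x)
    obtain ⟨ξ, hξ, he2⟩ := ih (fun i => g (i + 1)) η hη.1
      (fun x hx => (hd 1 x ⟨hx.1, hx.2.trans_lt hη.2⟩).continuousAt.continuousWithinAt)
      (fun i x hx => hd (i + 1) x ⟨hx.1, hx.2.trans hη.2⟩)
      (fun i hi => h0 (i + 1) (by omega))
    refine ⟨ξ, ⟨hξ.1, hξ.2.trans hη.2⟩, ?_⟩
    have hη0 : η ^ (n + 1) ≠ 0 := pow_ne_zero _ hη.1.ne'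
    have hf : ((n + 1).factorial : ℝ) ≠ 0 := by positivity
    have hn : ((n + 2 : ℕ) : ℝ) ≠ 0 := by positivity
    simp only [zero_add] at he2
    rw [h0 0 (by omega), he2] at he
    rw [Nat.factorial_succ (n + 1)]
    push_cast at he hn ⊢
    have h1 : (n : ℝ) + 1 + 1 ≠ 0 := by positivity
    rw [eq_div_iff (by positivity)]
    field_simp at he
    simp only [ne_eq, Nat.add_eq_zero_iff, OfNat.ofNat_ne_zero, and_false, not_false_eq_true,
      zero_pow, sub_zero] at he
    linear_combination -he

/-- Taylor's formula at `0` with Lagrange remainder, for a function that is smooth on `[0, h)` but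
merely continuous at `h`; `g i` is the `i`-th derivative of `g 0`. -/
lemma taylor_lagrange_of_continuousOn (n : ℕ) (g : ℕ → ℝ → ℝ) (h : ℝ) (hh : 0 < h)
    (hc : ContinuousOn (g 0) (Set.Icc 0 h))
    (hd : ∀ i, ∀ x ∈ Set.Ico 0 h, HasDerivAt (g i) (g (i + 1) x) x) :
    ∃ η ∈ Set.Ioo 0 h, g 0 h = (∑ l ∈ Finset.range (n + 1), g l 0 * h ^ l / (l.factorial : ℝ))
      + g (n + 1) η * h ^ (n + 1) / ((n + 1).factorial : ℝ) := by
  -- `P i` is the `i`-th derivative of the Taylor polynomial of degree `n`.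
  set P : ℕ → ℝ → ℝ := fun i x =>
    ∑ l ∈ Finset.range (n + 1 - i), g (i + l) 0 * x ^ l / (l.factorial : ℝ) with hP
  have hPd : ∀ i x, HasDerivAt (P i) (P (i + 1) x) x := by
    intro i x
    by_cases hi : n + 1 ≤ i
    · have e1 : P i = fun _ => 0 := by
        funext y; simp [hP, Nat.sub_eq_zero_of_le hi]
      have e2 : P (i + 1) x = 0 := by
        simp [hP, Nat.sub_eq_zero_of_le (by omega : n ≤ i)]
      rw [e1, e2]
      exact hasDerivAt_const _ _
    · obtain ⟨q, hq⟩ : ∃ q, n + 1 - i = q + 1 := ⟨n - i, by omega⟩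
      have hq' : n + 1 - (i + 1) = q := by omega
      have e1 : P i = fun y =>
          (∑ l ∈ Finset.range q, g (i + (l + 1)) 0 * y ^ (l + 1) / ((l + 1).factorial : ℝ))
            + g i 0 := by
        funext y
        simp only [hP, hq, Finset.sum_range_succ']
        simp
      have e2 : P (i + 1) x = ∑ l ∈ Finset.range q,
          g (i + (l + 1)) 0 * (((l + 1 : ℕ) : ℝ) * x ^ l) / ((l + 1).factorial : ℝ) := by
        simp only [hP, hq']
        refine Finset.sum_congr rfl fun l _ => ?_
        rw [Nat.factorial_succ, show i + 1 + l = i + (l + 1) by omega]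
        push_cast
        have : (l : ℝ) + 1 ≠ 0 := by positivity
        field_simp
      rw [e1, e2]
      refine HasDerivAt.add_const _ ?_
      refine HasDerivAt.fun_sum fun l _ => ?_
      exact ((hasDerivAt_pow (l + 1) x).const_mul _).div_const _
  obtain ⟨η, hη, he⟩ := exists_eq_of_vanishing n (fun i x => g i x - P i x) h hh
    (hc.sub fun x _ => (hPd 0 x).continuousAt.continuousWithinAt)
    (fun i x hx => (hd i x hx).sub (hPd i x))
    (fun i hi => by
      obtain ⟨q, hq⟩ : ∃ q, n + 1 - i = q + 1 := ⟨n - i, by omega⟩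
      simp only [hP, hq, Finset.sum_range_succ']
      simp)
  refine ⟨η, hη, ?_⟩
  have e1 : P (n + 1) η = 0 := by simp [hP]
  have e2 : P 0 h = ∑ l ∈ Finset.range (n + 1), g l 0 * h ^ l / (l.factorial : ℝ) := by simp [hP]
  simp only [e1, e2, sub_zero] at he
  linarith

lemma hasDerivAt_omegaRL {μ x : ℝ} (hμ : μ ≠ 0) (hx : 0 < x) :
    HasDerivAt (omegaRL (1 + μ)) (omegaRL μ x) x := by
  have h := (Real.hasDerivAt_rpow_const (p := μ) (Or.inl hx.ne')).div_const (Real.Gamma (1 + μ))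
  have e : omegaRL (1 + μ) = fun y => y ^ μ / Real.Gamma (1 + μ) := by
    funext y; simp [omegaRL]
  have e2 : omegaRL μ x = μ * x ^ (μ - 1) / Real.Gamma (1 + μ) := by
    rw [omegaRL, add_comm 1 μ, Real.Gamma_add_one hμ, mul_div_mul_left _ _ hμ]
  rw [e, e2]
  exact h

lemma hasDerivAt_Bfun {μ x κ : ℝ} (hμ : μ ≠ 0) (hκ : 0 < κ) (hx : 0 < x - κ / 2) :
    HasDerivAt (fun y => Bfun μ y κ) (Bfun (μ - 1) x κ) x := by
  have h1 := (hasDerivAt_omegaRL hμ (by linarith : 0 < x + κ / 2)).comp_add_const x (κ / 2)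
  have h2 := (hasDerivAt_omegaRL hμ hx).comp_sub_const x (κ / 2)
  have e : Bfun (μ - 1) x κ = omegaRL μ (x + κ / 2) - omegaRL μ (x - κ / 2) := by
    rw [Bfun, add_sub_cancel]
  rw [e]
  exact h1.sub h2

/-- For positive order, `B_ν(·, κ)` is continuous everywhere, in particular where an argument of
`ω_{1+ν}` vanishes. -/
lemma continuous_Bfun {ν κ : ℝ} (hν : 0 < ν) : Continuous (fun y => Bfun ν y κ) := by
  have : Continuous (omegaRL (1 + ν)) := by
    have e : omegaRL (1 + ν) = fun y => y ^ ν / Real.Gamma (1 + ν) := by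
      funext y; simp [omegaRL]
    rw [e]
    exact (Real.continuous_rpow_const hν.le).div_const _
  unfold Bfun
  fun_prop

/-- The weight as a difference of two values of `B_ν`; when `b = u` the integrand is
singular at `b`. -/
lemma integral_weight {ν a b u v : ℝ} (hν : 0 < ν) (hab : a < b) (hbu : b ≤ u) (huv : u < v) :
    ∫ s in a..b, ((u - s) ^ (ν - 1) - (v - s) ^ (ν - 1)) / Real.Gamma ν
      = Bfun ν ((u + v) / 2 - b) (v - u) - Bfun ν ((u + v) / 2 - a) (v - u) := by
  have key : ∀ s : ℝ, ((u - s) ^ (ν - 1) - (v - s) ^ (ν - 1)) / Real.Gamma ν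
      = -Bfun (ν - 1) ((u + v) / 2 - s) (v - u) := by
    intro s
    have e1 : (u + v) / 2 - s + (v - u) / 2 = v - s := by ring
    have e2 : (u + v) / 2 - s - (v - u) / 2 = u - s := by ring
    rw [Bfun, omegaRL, omegaRL, e1, e2, add_sub_cancel]
    ring
  have hint : ∀ w : ℝ, IntervalIntegrable (fun s => (w - s) ^ (ν - 1)) MeasureTheory.volume a b := by
    intro w
    have := (intervalIntegral.intervalIntegrable_rpow' (a := w - a) (b := w - b)
      (by linarith : -1 < ν - 1)).comp_sub_left w
    simpa using this
  refine intervalIntegral.integral_eq_sub_of_hasDerivAt_of_le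
    (f := fun s => Bfun ν ((u + v) / 2 - s) (v - u)) hab.le
    ((continuous_Bfun hν).comp (by fun_prop)).continuousOn (fun s hs => ?_)
    (((hint u).sub (hint v)).div_const _)
  rw [key]
  have h1 : 0 < (u + v) / 2 - s - (v - u) / 2 := by linarith [hs.2]
  simpa using (hasDerivAt_Bfun hν.ne' (by linarith) h1).comp_const_sub ((u + v) / 2) s

/-- The odd Taylor expansion of `x ↦ B_ν(d - x, κ) - B_ν(d + x, κ)`. -/
lemma Bfun_symm_expansion {ν κ d h : ℝ} (hν0 : 0 < ν) (hν1 : ν < 1) (hκ : 0 < κ) (hh : 0 < h)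
    (hd : h ≤ d - κ / 2) (r : ℕ) :
    ∃ ξ ∈ Set.Ioo (d - h) (d + h),
      Bfun ν (d - h) κ - Bfun ν (d + h) κ
        = -(∑ p ∈ Finset.range r, 2 * Bfun (ν - (2 * (p : ℝ) + 1)) d κ * h ^ (2 * p + 1)
              / ((2 * p + 1).factorial : ℝ))
          - 2 * Bfun (ν - (2 * (r : ℝ) + 1)) ξ κ * h ^ (2 * r + 1)
              / ((2 * r + 1).factorial : ℝ) := by
  -- `0 < ν < 1` keeps every order `ν - i` away from the pole of the recursion for `Γ`.
  have hne : ∀ i : ℕ, ν - (i : ℝ) ≠ 0 := by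
    intro i hi
    rcases Nat.eq_zero_or_pos i with rfl | hi'
    · simp at hi; linarith
    · have : (1 : ℝ) ≤ i := by exact_mod_cast hi'
      linarith
  set g : ℕ → ℝ → ℝ := fun i x =>
    (-1) ^ i * Bfun (ν - i) (d - x) κ - Bfun (ν - i) (d + x) κ with hg
  have hgd : ∀ i, ∀ x ∈ Set.Ico 0 h, HasDerivAt (g i) (g (i + 1) x) x := by
    intro i x hx
    have h1 := (hasDerivAt_Bfun (x := d - x) (hne i) hκ
      (by linarith [hx.2])).comp_const_sub d x
    have h2 := (hasDerivAt_Bfun (x := d + x) (hne i) hκ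
      (by linarith [hx.1])).comp_const_add d x
    have e : g (i + 1) x
        = (-1) ^ i * -Bfun (ν - i - 1) (d - x) κ - Bfun (ν - i - 1) (d + x) κ := by
      simp only [hg]
      push_cast
      rw [← sub_sub]
      ring
    rw [e]
    exact (h1.const_mul ((-1 : ℝ) ^ i)).sub h2
  have hgc : ContinuousOn (g 0) (Set.Icc 0 h) := by
    have := continuous_Bfun (κ := κ) hν0
    have : Continuous (g 0) := by
      simp only [hg, pow_zero, one_mul, Nat.cast_zero, sub_zero]
      exact (this.comp (by fun_prop : Continuous fun x => d - x)).sub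
        (this.comp (by fun_prop : Continuous fun x => d + x))
    exact this.continuousOn
  obtain ⟨η, hη, he⟩ := taylor_lagrange_of_continuousOn (2 * r) g h hh hgc hgd
  have hsum : ∀ q : ℕ, (∑ l ∈ Finset.range (2 * q + 1), g l 0 * h ^ l / (l.factorial : ℝ))
      = -∑ p ∈ Finset.range q, 2 * Bfun (ν - (2 * (p : ℝ) + 1)) d κ * h ^ (2 * p + 1)
              / ((2 * p + 1).factorial : ℝ) := by
    intro q
    induction q with
    | zero => simp [hg]
    | succ q ih =>
      rw [show 2 * (q + 1) + 1 = 2 * q + 1 + 1 + 1 by ring, Finset.sum_range_succ,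
        Finset.sum_range_succ, ih, Finset.sum_range_succ]
      have e1 : g (2 * q + 1) 0 = -(2 * Bfun (ν - (2 * (q : ℝ) + 1)) d κ) := by
        simp only [hg, pow_succ, pow_mul]
        push_cast
        simp
        ring
      have e2 : g (2 * q + 1 + 1) 0 = 0 := by
        simp only [hg, pow_succ, pow_mul]
        simp
      rw [e1, e2]
      ring
  set f : ℝ → ℝ := fun y => Bfun (ν - (2 * (r : ℝ) + 1)) y κ with hf
  have hfc : ContinuousOn f (Set.uIcc (d - η) (d + η)) := by
    intro y hy
    rw [Set.uIcc_of_le (by linarith [hη.1])] at hy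
    have hr := hne (2 * r + 1)
    push_cast at hr
    exact (hasDerivAt_Bfun hr hκ (by linarith [hy.1, hη.2])).continuousAt.continuousWithinAt
  have hmid : (f (d - η) + f (d + η)) / 2 ∈ Set.uIcc (f (d - η)) (f (d + η)) := by
    rw [Set.mem_uIcc]
    rcases le_total (f (d - η)) (f (d + η)) with h1 | h1
    · left; constructor <;> linarith
    · right; constructor <;> linarith
  obtain ⟨ξ, hξ, hfξ⟩ := intermediate_value_uIcc hfc hmid
  rw [Set.uIcc_of_le (by linarith [hη.1])] at hξ
  refine ⟨ξ, ⟨by linarith [hξ.1, hη.2], by linarith [hξ.2, hη.2]⟩, ?_⟩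
  have e0 : g 0 h = Bfun ν (d - h) κ - Bfun ν (d + h) κ := by simp [hg]
  have e1 : g (2 * r + 1) η = -(2 * f ξ) := by
    rw [hfξ]
    simp only [hg, hf, pow_succ, pow_mul]
    push_cast
    simp
    ring
  rw [hsum, e0, e1] at he
  rw [he]
  ring

/-- **Odd-power expansion of the weights (Appendix B).**
For `1 ≤ j ≤ n−1` there exists `t* ∈ I_j` such that
`β_nj = − Σ_{p=0}^{r−1} B_{ν−2p−1}(Δ_nj, k_n) k_j^{2p+1} / ((2p+1)! 2^{2p})
        − B_{ν−2r−1}(t_{n−1/2} − t*, k_n) k_j^{2r+1} / ((2r+1)! 2^{2r})`. -/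
theorem beta_odd_power_expansion
    (T : ℝ) (hT : 0 < T) (N : ℕ) (hN : 1 ≤ N)
    (t : ℕ → ℝ) (ht0 : t 0 = 0) (htN : t N = T)
    (htmono : ∀ i, i < N → t i < t (i + 1))
    (ν : ℝ) (hν0 : 0 < ν) (hν1 : ν < 1)
    (k : ℕ → ℝ) (hk : ∀ n, k n = t n - t (n - 1))
    (β : ℕ → ℕ → ℝ)
    (hβ : ∀ j n, 1 ≤ j → j < n → n ≤ N →
      β n j = ∫ s in (t (j - 1))..(t j),
        ((t (n - 1) - s) ^ (ν - 1) - (t n - s) ^ (ν - 1)) / Real.Gamma ν)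
    (j n : ℕ) (hj : 1 ≤ j) (hjn : j < n) (hnN : n ≤ N)
    (r : ℕ) (hr : 1 ≤ r) :
    ∃ tstar ∈ Set.Ioc (t (j - 1)) (t j),
      β n j
        = -(∑ p ∈ Finset.range r,
              Bfun (ν - (2 * (p : ℝ) + 1))
                  ((t (n - 1) + t n) / 2 - (t (j - 1) + t j) / 2) (k n)
                / (((2 * p + 1).factorial : ℝ) * (2 : ℝ) ^ (2 * p)) * k j ^ (2 * p + 1))
          - Bfun (ν - (2 * (r : ℝ) + 1)) ((t (n - 1) + t n) / 2 - tstar) (k n)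
              / (((2 * r + 1).factorial : ℝ) * (2 : ℝ) ^ (2 * r)) * k j ^ (2 * r + 1) := by
  have hmono : ∀ q i, i + q ≤ N → t i ≤ t (i + q) := by
    intro q
    induction q with
    | zero => intro i _; simp
    | succ q ih => intro i hi; exact (ih i (by omega)).trans (htmono (i + q) (by omega)).le
  have hab : t (j - 1) < t j := by
    have := htmono (j - 1) (by omega)
    rwa [Nat.sub_add_cancel hj] at this
  have huv : t (n - 1) < t n := by
    have := htmono (n - 1) (by omega)
    rwa [Nat.sub_add_cancel (by omega)] at this
  have hbu : t j ≤ t (n - 1) := by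
    have := hmono (n - 1 - j) j (by omega)
    rwa [show j + (n - 1 - j) = n - 1 by omega] at this
  rw [hβ j n hj hjn hnN, integral_weight hν0 hab hbu huv, hk n, hk j]
  generalize t (j - 1) = a at *
  generalize t j = b at *
  generalize t (n - 1) = u at *
  generalize t n = v at *
  obtain ⟨ξ, hξ, he⟩ := Bfun_symm_expansion (ν := ν) (κ := v - u)
    (d := (u + v) / 2 - (a + b) / 2) (h := (b - a) / 2) hν0 hν1 (by linarith) (by linarith)
    (by linarith) r
  refine ⟨(u + v) / 2 - ξ, ⟨by linarith [hξ.2], by linarith [hξ.1]⟩, ?_⟩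
  rw [show (u + v) / 2 - (a + b) / 2 - (b - a) / 2 = (u + v) / 2 - b by ring,
    show (u + v) / 2 - (a + b) / 2 + (b - a) / 2 = (u + v) / 2 - a by ring] at he
  have hterm : ∀ (p : ℕ) (z : ℝ), 2 * z * ((b - a) / 2) ^ (2 * p + 1) / ((2 * p + 1).factorial : ℝ)
      = z / (((2 * p + 1).factorial : ℝ) * (2 : ℝ) ^ (2 * p)) * (b - a) ^ (2 * p + 1) := by
    intro p z
    rw [div_pow, pow_succ (2 : ℝ)]
    field_simp
  simp only [hterm] at he
  rw [he, sub_sub_cancel]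
end
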